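/- The second derivative of the piecewise density P has a finite discontinuity at l = a: the derivative function P′ is not differentiable at l = a. Equivalently, the second derivative of the polynomial piece P₁ at l = a differs from the limit as l → a⁺ of the second derivative of P₂. -/

import Mathlib

open MeasureTheory Real Set Filter Topology

/-- The density of separations on the range `0 ≤ l ≤ a`. -/
noncomputable def P₁ (a l : ℝ) : ℝ :=
  l ^ 2 * (4 * π * a ^ 3 - 6 * π * a ^ 2 * l + 8 * a * l ^ 2 - l ^ 3) / a ^ 6

/-- The density of separations on the range `a ≤ l ≤ √2·a`. -/
noncomputable def P₂ (a l : ℝ) : ℝ :=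
  l / a ^ 6 *
    (2 * l ^ 4 + 6 * a ^ 2 * l ^ 2 - a ^ 4 - 2 * π * a ^ 3 * (4 * l - 3 * a)
      - 8 * a * (2 * l ^ 2 + a ^ 2) * Real.sqrt (l ^ 2 - a ^ 2)
      + 24 * a ^ 2 * l ^ 2 * Real.arccos (a / l))


/-- The piecewise density: `P₁` on `[0,a]` and `P₂` on `[a, √2·a]`. -/
noncomputable def P (a l : ℝ) : ℝ :=
  if l ≤ a then P₁ a l else P₂ a l

noncomputable def gA (a l : ℝ) : ℝ :=
  2 * l ^ 4 + 6 * a ^ 2 * l ^ 2 - a ^ 4 - 2 * π * a ^ 3 * (4 * l - 3 * a)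
      - 8 * a * (2 * l ^ 2 + a ^ 2) * Real.sqrt (l ^ 2 - a ^ 2)
      + 24 * a ^ 2 * l ^ 2 * Real.arccos (a / l)

noncomputable def gB (a l : ℝ) : ℝ :=
  8 * l ^ 3 + 12 * a ^ 2 * l - 8 * π * a ^ 3 - 48 * a * l * Real.sqrt (l ^ 2 - a ^ 2)
      + 48 * a ^ 2 * l * Real.arccos (a / l)

noncomputable def gC (a l : ℝ) : ℝ :=
  24 * l ^ 2 + 12 * a ^ 2 - 96 * a * Real.sqrt (l ^ 2 - a ^ 2)
      + 48 * a ^ 2 * Real.arccos (a / l)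

lemma hasDeriv_s (a l : ℝ) (ha : 0 < a) (hl : a < l) :
    HasDerivAt (fun l => Real.sqrt (l ^ 2 - a ^ 2)) (l / Real.sqrt (l ^ 2 - a ^ 2)) l := by
  have h : 0 < l ^ 2 - a ^ 2 := by nlinarith
  have := (((hasDerivAt_id l).pow 2).sub_const (a ^ 2)).sqrt h.ne'
  refine HasDerivAt.congr_deriv this (Eq.symm ?_)
  simp only [id]
  have := Real.sqrt_pos.2 h
  simp
  field_simp

lemma hasDeriv_A (a l : ℝ) (ha : 0 < a) (hl : a < l) :
    HasDerivAt (fun l => Real.arccos (a / l)) (a / (l * Real.sqrt (l ^ 2 - a ^ 2))) l := by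
  have hl0 : 0 < l := ha.trans hl
  have h : 0 < l ^ 2 - a ^ 2 := by nlinarith
  have h1 : a / l < 1 := (div_lt_one hl0).2 hl
  have h0 : 0 < a / l := by positivity
  have hd : HasDerivAt (fun l : ℝ => a / l) (-a / l ^ 2) l := by
    have := (hasDerivAt_const l a).div (hasDerivAt_id l) hl0.ne'
    refine HasDerivAt.congr_deriv this (Eq.symm ?_)
    simp
  have := (Real.hasDerivAt_arccos (x := a / l) (by linarith) h1.ne).comp l hd
  refine HasDerivAt.congr_deriv this (Eq.symm ?_)
  have e : Real.sqrt (1 - (a / l) ^ 2) = Real.sqrt (l ^ 2 - a ^ 2) / l := by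
    rw [show 1 - (a / l) ^ 2 = (l ^ 2 - a ^ 2) / l ^ 2 by field_simp, Real.sqrt_div h.le,
      Real.sqrt_sq hl0.le]
  rw [e]
  have := Real.sqrt_pos.2 h
  field_simp

lemma hasDeriv_gA (a l : ℝ) (ha : 0 < a) (hl : a < l) : HasDerivAt (gA a) (gB a l) l := by
  have hl0 : 0 < l := ha.trans hl
  have h : 0 < l ^ 2 - a ^ 2 := by nlinarith
  have hs := Real.sqrt_pos.2 h
  have hq := Real.sq_sqrt h.le
  have i := hasDerivAt_id l
  have := (((((((i.pow 4).const_mul 2).add ((i.pow 2).const_mul (6 * a ^ 2))).sub_const (a ^ 4)).sub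
    (((i.const_mul 4).sub_const (3 * a)).const_mul (2 * π * a ^ 3))).sub
    (((((i.pow 2).const_mul 2).add_const (a ^ 2)).const_mul (8 * a)).mul (hasDeriv_s a l ha hl))).add
    (((i.pow 2).const_mul (24 * a ^ 2)).mul (hasDeriv_A a l ha hl)))
  refine HasDerivAt.congr_deriv this (Eq.symm ?_)
  simp only [gB, id, Pi.pow_apply]
  generalize Real.sqrt (l ^ 2 - a ^ 2) = s at *
  generalize Real.arccos (a / l) = A at *
  norm_num
  field_simp
  linear_combination (-16 * a * l) * hq

lemma hasDeriv_gB (a l : ℝ) (ha : 0 < a) (hl : a < l) : HasDerivAt (gB a) (gC a l) l := by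
  have hl0 : 0 < l := ha.trans hl
  have h : 0 < l ^ 2 - a ^ 2 := by nlinarith
  have hs := Real.sqrt_pos.2 h
  have hq := Real.sq_sqrt h.le
  have i := hasDerivAt_id l
  have := ((((((i.pow 3).const_mul 8).add (i.const_mul (12 * a ^ 2))).sub_const (8 * π * a ^ 3)).sub
    ((i.const_mul (48 * a)).mul (hasDeriv_s a l ha hl))).add
    ((i.const_mul (48 * a ^ 2)).mul (hasDeriv_A a l ha hl)))
  refine HasDerivAt.congr_deriv this (Eq.symm ?_)
  simp only [gC, id, Pi.pow_apply]
  generalize Real.sqrt (l ^ 2 - a ^ 2) = s at *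
  generalize Real.arccos (a / l) = A at *
  norm_num
  field_simp
  linear_combination (-48 * a) * hq

lemma deriv_P2 (a l : ℝ) (ha : 0 < a) (hl : a < l) :
    HasDerivAt (P₂ a) ((gA a l + l * gB a l) / a ^ 6) l := by
  have := ((hasDerivAt_id l).div_const (a ^ 6)).mul (hasDeriv_gA a l ha hl)
  refine HasDerivAt.congr_deriv this (Eq.symm ?_)
  simp only [id]
  ring

lemma deriv2_P2 (a l : ℝ) (ha : 0 < a) (hl : a < l) :
    HasDerivAt (deriv (P₂ a)) ((2 * gB a l + l * gC a l) / a ^ 6) l := by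
  have := ((hasDeriv_gA a l ha hl).add ((hasDerivAt_id l).mul (hasDeriv_gB a l ha hl))).div_const (a ^ 6)
  have h2 : HasDerivAt (fun l => (gA a l + l * gB a l) / a ^ 6)
      ((2 * gB a l + l * gC a l) / a ^ 6) l := by
    refine HasDerivAt.congr_deriv this (Eq.symm ?_)
    simp only [id]
    ring
  refine h2.congr_of_eventuallyEq ?_
  filter_upwards [Ioi_mem_nhds hl] with x hx
  exact (deriv_P2 a x ha hx).deriv

lemma deriv_P1 (a l : ℝ) :
    HasDerivAt (P₁ a) ((8 * π * a ^ 3 * l - 18 * π * a ^ 2 * l ^ 2 + 32 * a * l ^ 3 - 5 * l ^ 4) / a ^ 6) l := by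
  have i := hasDerivAt_id l
  have := ((i.pow 2).mul ((((i.const_mul (6 * π * a ^ 2)).const_sub (4 * π * a ^ 3)).add
    ((i.pow 2).const_mul (8 * a))).sub (i.pow 3))).div_const (a ^ 6)
  refine HasDerivAt.congr_deriv this (Eq.symm ?_)
  simp
  ring

lemma deriv2_P1 (a l : ℝ) :
    HasDerivAt (deriv (P₁ a)) ((8 * π * a ^ 3 - 36 * π * a ^ 2 * l + 96 * a * l ^ 2 - 20 * l ^ 3) / a ^ 6) l := by
  have e : deriv (P₁ a) = _ := funext fun x => (deriv_P1 a x).deriv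
  rw [e]
  have i := hasDerivAt_id l
  have := ((((i.const_mul (8 * π * a ^ 3)).sub ((i.pow 2).const_mul (18 * π * a ^ 2))).add
    ((i.pow 3).const_mul (32 * a))).sub ((i.pow 4).const_mul 5)).div_const (a ^ 6)
  refine HasDerivAt.congr_deriv this (Eq.symm ?_)
  simp
  ring

lemma P_left (a x : ℝ) (hx : x < a) : deriv (P a) x = deriv (P₁ a) x := by
  apply Filter.EventuallyEq.deriv_eq
  filter_upwards [Iio_mem_nhds hx] with y hy
  exact if_pos (le_of_lt hy)

lemma P_right (a x : ℝ) (hx : a < x) : deriv (P a) x = deriv (P₂ a) x := by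
  apply Filter.EventuallyEq.deriv_eq
  filter_upwards [Ioi_mem_nhds hx] with y hy
  exact if_neg (not_le_of_gt hy)

theorem second_deriv_discontinuous_at_a (a : ℝ) (ha : 0 < a) :
    ¬ DifferentiableAt ℝ (deriv (P a)) a ∧
    ∃ L : ℝ, Tendsto (fun l => deriv (deriv (P₂ a)) l) (𝓝[>] a) (𝓝 L) ∧
      deriv (deriv (P₁ a)) a ≠ L := by
  have hT : Tendsto (fun l => (2 * gB a l + l * gC a l) / a ^ 6) (𝓝[>] a)
      (𝓝 ((2 * gB a a + a * gC a a) / a ^ 6)) := by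
    have : ContinuousAt (fun l => (2 * gB a l + l * gC a l) / a ^ 6) a := by
      have hd : ContinuousAt (fun l : ℝ => Real.arccos (a / l)) a :=
        Real.continuous_arccos.continuousAt.comp (continuousAt_const.div continuousAt_id ha.ne')
      unfold gB gC
      fun_prop
    exact this.tendsto.mono_left nhdsWithin_le_nhds
  have hne : deriv (deriv (P₁ a)) a ≠ (2 * gB a a + a * gC a a) / a ^ 6 := by
    rw [(deriv2_P1 a a).deriv]
    intro h
    rw [div_left_inj' (by positivity)] at h
    simp only [gB, gC, sub_self, Real.sqrt_zero, div_self ha.ne', Real.arccos_one] at h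
    have : 0 < π * a ^ 3 := by positivity
    nlinarith
  have hT2 : Tendsto (fun l => deriv (deriv (P₂ a)) l) (𝓝[>] a)
      (𝓝 ((2 * gB a a + a * gC a a) / a ^ 6)) := by
    refine hT.congr' ?_
    filter_upwards [self_mem_nhdsWithin] with x hx
    exact (deriv2_P2 a x ha hx).deriv.symm
  refine ⟨fun hD => hne ?_, _, hT2, hne⟩
  have eR : ∀ x ∈ Ioi a, deriv (P a) =ᶠ[𝓝 x] deriv (P₂ a) := fun x hx => by
    filter_upwards [Ioi_mem_nhds hx] with y hy using P_right a y hy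
  have eL : ∀ x ∈ Iio a, deriv (P a) =ᶠ[𝓝 x] deriv (P₁ a) := fun x hx => by
    filter_upwards [Iio_mem_nhds hx] with y hy using P_left a y hy
  have hR : HasDerivWithinAt (deriv (P a)) ((2 * gB a a + a * gC a a) / a ^ 6) (Ici a) a := by
    refine hasDerivWithinAt_Ici_of_tendsto_deriv (s := Ioi a) ?_
      hD.continuousAt.continuousWithinAt self_mem_nhdsWithin ?_
    · intro x hx
      exact (((deriv2_P2 a x ha hx).congr_of_eventuallyEq (eR x hx)).differentiableAt).differentiableWithinAt
    · refine hT2.congr' ?_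
      filter_upwards [self_mem_nhdsWithin] with x hx
      exact (eR x hx).deriv_eq.symm
  have hL : HasDerivWithinAt (deriv (P a)) (deriv (deriv (P₁ a)) a) (Iic a) a := by
    refine hasDerivWithinAt_Iic_of_tendsto_deriv (s := Iio a) ?_
      hD.continuousAt.continuousWithinAt self_mem_nhdsWithin ?_
    · intro x hx
      exact (((deriv2_P1 a x).congr_of_eventuallyEq (eL x hx)).differentiableAt).differentiableWithinAt
    · have hc : Continuous (deriv (deriv (P₁ a))) := by
        have e : deriv (deriv (P₁ a)) = _ := funext fun x => (deriv2_P1 a x).deriv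
        rw [e]
        fun_prop
      refine (hc.continuousAt.tendsto.mono_left nhdsWithin_le_nhds).congr' ?_
      filter_upwards [self_mem_nhdsWithin] with x hx
      exact (eL x hx).deriv_eq.symm
  have h1 := (uniqueDiffOn_Ici a a self_mem_Ici).eq_deriv _ hR hD.hasDerivAt.hasDerivWithinAt
  have h2 := (uniqueDiffOn_Iic a a self_mem_Iic).eq_deriv _ hL hD.hasDerivAt.hasDerivWithinAt
  rw [h1, h2]
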